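/- For every τ in the complex upper half-plane ℍ, one has (q·d/dq) h(τ) = −E*(2τ)·h(τ) + 64·E_odd(τ). -/

import Mathlib

noncomputable section
open Complex Real

/-- `q = e^{2πiτ}`. -/
def nome (τ : ℂ) : ℂ := Complex.exp (2 * (π : ℂ) * I * τ)

/-- Dedekind eta function `η(τ) = e^{πiτ/12} ∏_{n≥1} (1 − qⁿ)`. -/
def dedekindEta (τ : ℂ) : ℂ :=
  Complex.exp ((π : ℂ) * I * τ / 12) * ∏' n : ℕ, (1 - nome τ ^ (n + 1))

/-- Sum of the positive odd divisors of `n`. -/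
def sigmaOdd (n : ℕ) : ℕ := ∑ d ∈ n.divisors.filter (fun d => Odd d), d

/-- `E*(τ) = 1 + 24 Σ_{n≥1} σ_odd(n) qⁿ`. -/
def Estar (τ : ℂ) : ℂ := 1 + 24 * ∑' n : ℕ, (sigmaOdd (n + 1) : ℂ) * nome τ ^ (n + 1)

/-- `E_odd(τ) = Σ_{n≥0} σ₁(2n+1) q^{2n+1}`. -/
def Eodd (τ : ℂ) : ℂ :=
  ∑' n : ℕ, ((∑ d ∈ (2 * n + 1).divisors, d : ℕ) : ℂ) * nome τ ^ (2 * n + 1)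

/-- `h(τ) = (η(2τ)⁴/η(4τ)⁸)·E*(2τ)`. -/
def hfun (τ : ℂ) : ℂ := dedekindEta (2 * τ) ^ 4 / dedekindEta (4 * τ) ^ 8 * Estar (2 * τ)


section
open Complex Real
/-- Generating series of `σ_k`. -/
def Sg (k : ℕ) (q : ℂ) : ℂ := ∑' n : ℕ, (ArithmeticFunction.sigma k n : ℂ) * q ^ n

lemma Sg_summable (k : ℕ) {q : ℂ} (hq : ‖q‖ < 1) :
    Summable fun n : ℕ => (ArithmeticFunction.sigma k n : ℂ) * q ^ n := by
  apply Summable.of_norm_bounded (summable_norm_pow_mul_geometric_of_norm_lt_one (k + 1) hq)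
  intro n
  rw [norm_mul, norm_mul]
  gcongr
  rw [← Nat.cast_pow, Complex.norm_natCast, Complex.norm_natCast]
  exact_mod_cast ArithmeticFunction.sigma_le_pow_succ k n

lemma Sg_diffOn (k : ℕ) : DifferentiableOn ℂ (Sg k) (Metric.ball 0 1) := by
  intro q hq
  have hq' : ‖q‖ < 1 := by simpa using hq
  obtain ⟨r, hr, hr1⟩ := exists_between hq'
  have hr0 : 0 ≤ r := (norm_nonneg _).trans hr.le
  have hd : DifferentiableOn ℂ (Sg k) (Metric.ball 0 r) := by
    have hs := (Sg_summable k (q := (r : ℂ)) (by simpa [abs_of_nonneg hr0] using hr1)).norm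
    refine differentiableOn_tsum_of_summable_norm hs (fun i => by fun_prop) Metric.isOpen_ball ?_
    intro i w hw
    have : ‖w‖ < r := by simpa using hw
    rw [norm_mul, norm_mul, norm_pow, norm_pow]
    gcongr
    simpa [abs_of_nonneg hr0] using this.le
  exact (hd.differentiableAt (Metric.isOpen_ball.mem_nhds (by simpa using hr))).differentiableWithinAt

lemma Sg_diffAt (k : ℕ) {q : ℂ} (hq : ‖q‖ < 1) : DifferentiableAt ℂ (Sg k) q :=
  (Sg_diffOn k).differentiableAt (Metric.isOpen_ball.mem_nhds (by simpa using hq))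

lemma Sg_zero (k : ℕ) : Sg k 0 = 0 := by
  unfold Sg
  rw [tsum_congr (g := fun _ => (0 : ℂ))]
  · simp
  · intro n
    rcases eq_or_ne n 0 with rfl | hn
    · simp
    · simp [hn]

lemma Sg_hasDerivAt_zero (k : ℕ) : HasDerivAt (Sg k) 1 0 := by
  set g : ℂ → ℂ := fun q => ∑' n : ℕ, (ArithmeticFunction.sigma k (n + 1) : ℂ) * q ^ n with hg
  have hs : Summable fun n : ℕ => ‖(ArithmeticFunction.sigma k (n + 1) : ℂ) * ((1 / 2 : ℝ) : ℂ) ^ n‖ := by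
    have h := (Sg_summable k (q := ((1 / 2 : ℝ) : ℂ)) (by rw [Complex.norm_real]; norm_num)).norm
    have h2 := ((summable_nat_add_iff 1).mpr h).mul_left 2
    refine h2.congr fun n => ?_
    simp only [pow_succ, norm_mul, Complex.norm_real]
    norm_num
    ring
  have hd : DifferentiableOn ℂ g (Metric.ball 0 (1 / 2)) := by
    refine differentiableOn_tsum_of_summable_norm hs (fun i => by fun_prop) Metric.isOpen_ball ?_
    intro i w hw
    have : ‖w‖ < 1 / 2 := by simpa using hw
    rw [norm_mul, norm_mul, norm_pow, norm_pow, Complex.norm_real]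
    gcongr
    rw [Real.norm_of_nonneg (by norm_num)]
    exact this.le
  have hd0 : DifferentiableAt ℂ g 0 := hd.differentiableAt (Metric.ball_mem_nhds _ (by norm_num))
  have hg0 : g 0 = 1 := by
    simp only [hg]
    rw [tsum_eq_single 0]
    · simp
    · intro n hn; simp [hn]
  have h1 : HasDerivAt (fun q => q * g q) 1 0 := by
    have := (hasDerivAt_id (0 : ℂ)).mul hd0.hasDerivAt
    simpa [hg0] using! this
  refine h1.congr_of_eventuallyEq ?_
  filter_upwards [Metric.ball_mem_nhds (0 : ℂ) one_pos] with q hq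
  have hq' : ‖q‖ < 1 := by simpa using hq
  unfold Sg
  rw [(Sg_summable k hq').tsum_eq_zero_add]
  simp only [hg, ← tsum_mul_left]
  simp only [ArithmeticFunction.map_zero, Nat.cast_zero, zero_mul, zero_add]
  refine tsum_congr fun n => by ring

lemma tsum_split {f : ℕ → ℂ} (hf : Summable f) :
    ∑' n, f n = ∑' n, f (2 * n) + ∑' n, f (2 * n + 1) :=
  (tsum_even_add_odd (hf.comp_injective (fun a b h => by simpa using h))
    (hf.comp_injective (fun a b h => by simpa using h))).symm

/-- Lambert form. -/
lemma Sg_lambert {k : ℕ} (hk : k ≠ 0) {q : ℂ} (hq : ‖q‖ < 1) :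
    Sg k q = ∑' n : ℕ, (n : ℂ) ^ k * q ^ n / (1 - q ^ n) := by
  have h := tsum_pow_div_one_sub_eq_tsum_sigma hq k
  unfold Sg
  rw [← tsum_zero_pnat_eq_tsum_nat, ← tsum_zero_pnat_eq_tsum_nat, h]
  · simp [hk]
  · exact summable_norm_pow_mul_geometric_div_one_sub k hq
  · exact Sg_summable k hq

lemma Sg_hecke {k : ℕ} (hk : k ≠ 0) {q : ℂ} (hq : ‖q‖ < 1) :
    Sg k q + Sg k (-q) = (2 * 2 ^ k + 2) * Sg k (q ^ 2) - 2 * 2 ^ k * Sg k (q ^ 4) := by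
  have hq2 : ‖q ^ 2‖ < 1 := by rw [norm_pow]; exact pow_lt_one₀ (norm_nonneg _) hq (by norm_num)
  have hq4 : ‖q ^ 4‖ < 1 := by rw [norm_pow]; exact pow_lt_one₀ (norm_nonneg _) hq (by norm_num)
  have hqn : ‖-q‖ < 1 := by simpa using hq
  set f : ℂ → ℕ → ℂ := fun q n => (n : ℂ) ^ k * q ^ n / (1 - q ^ n) with hf
  have hs : ∀ {q : ℂ}, ‖q‖ < 1 → Summable (f q) := fun h =>
    summable_norm_pow_mul_geometric_div_one_sub k h
  have hse : ∀ {q : ℂ}, ‖q‖ < 1 → Summable (fun n => f q (2 * n)) := fun h =>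
    (hs h).comp_injective (fun a b h => by simpa using h)
  have hso : ∀ {q : ℂ}, ‖q‖ < 1 → Summable (fun n => f q (2 * n + 1)) := fun h =>
    (hs h).comp_injective (fun a b h => by simpa using h)
  have split : ∀ {q : ℂ}, ‖q‖ < 1 → Sg k q = ∑' n, f q (2 * n) + ∑' n, f q (2 * n + 1) :=
    fun h => by rw [Sg_lambert hk h, tsum_even_add_odd (hse h) (hso h)]
  have even : ∀ {q : ℂ}, ‖q ^ 2‖ < 1 → ∑' n, f q (2 * n) = 2 ^ k * Sg k (q ^ 2) := fun {q} h => by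
    rw [Sg_lambert hk h, ← tsum_mul_left]
    refine tsum_congr fun n => ?_
    simp only [hf, pow_mul]
    push_cast
    ring
  have odd : ∑' n, f q (2 * n + 1) + ∑' n, f (-q) (2 * n + 1)
      = 2 * ∑' n, f (q ^ 2) (2 * n + 1) := by
    rw [← (hso hq).tsum_add (hso hqn), ← tsum_mul_left]
    refine tsum_congr fun n => ?_
    simp only [hf]
    have ho : Odd (2 * n + 1) := ⟨n, rfl⟩
    rw [ho.neg_pow, ← pow_mul, mul_comm 2 (2 * n + 1), pow_mul]
    set x := q ^ (2 * n + 1)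
    have hx : ‖x‖ < 1 := by
      simp only [x]; rw [norm_pow]; exact pow_lt_one₀ (norm_nonneg _) hq (by omega)
    have h1 : 1 - x ≠ 0 := fun h => by
      rw [← sub_eq_zero.mp h] at hx; simp at hx
    have h2 : 1 - -x ≠ 0 := fun h => by
      rw [show x = -1 by linear_combination h] at hx; simp at hx
    have h3 : 1 - x ^ 2 ≠ 0 := by
      rw [show 1 - x ^ 2 = (1 - x) * (1 - -x) by ring]; exact mul_ne_zero h1 h2
    field_simp
    ring
  have e1 := split hq
  have e2 := split hqn
  have e3 := split hq2
  rw [even hq2] at e1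
  rw [even (by simpa using hq2)] at e2
  rw [even (by rw [← pow_mul]; exact hq4)] at e3
  rw [neg_sq] at e2
  rw [← pow_mul] at e3
  norm_num at e3
  linear_combination e1 + e2 + odd - 2 * e3

lemma Sg_odd (k : ℕ) {q : ℂ} (hq : ‖q‖ < 1) :
    Sg k q - Sg k (-q) = 2 * ∑' n : ℕ, (ArithmeticFunction.sigma k (2 * n + 1) : ℂ) * q ^ (2 * n + 1) := by
  have hqn : ‖-q‖ < 1 := by simpa using hq
  have e1 := tsum_split (Sg_summable k hq)
  have e2 := tsum_split (Sg_summable k hqn)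
  unfold Sg
  rw [e1, e2]
  have h1 : ∀ n : ℕ, (-q) ^ (2 * n) = q ^ (2 * n) := fun n => (even_two_mul n).neg_pow q
  have h2 : ∀ n : ℕ, (-q) ^ (2 * n + 1) = -q ^ (2 * n + 1) := fun n => Odd.neg_pow ⟨n, rfl⟩ q
  simp only [h1, h2, mul_neg, tsum_neg]
  ring

lemma sigmaOdd_even (m : ℕ) (hm : m ≠ 0) :
    ArithmeticFunction.sigma 1 (2 * m) = sigmaOdd (2 * m) + 2 * ArithmeticFunction.sigma 1 m := by
  rw [ArithmeticFunction.sigma_one_apply, ArithmeticFunction.sigma_one_apply, sigmaOdd,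
    ← Finset.sum_filter_add_sum_filter_not _ (fun d => Odd d)]
  congr 1
  rw [Finset.mul_sum]
  symm
  refine Finset.sum_bij (fun d _ => 2 * d) ?_ ?_ ?_ ?_
  · intro d hd
    simp only [Nat.mem_divisors, Finset.mem_filter] at *
    exact ⟨⟨Nat.mul_dvd_mul_left 2 hd.1, by omega⟩, by simp⟩
  · intro a _ b _ h; simpa using h
  · intro b hb
    simp only [Nat.mem_divisors, Finset.mem_filter, Nat.not_odd_iff_even] at *
    obtain ⟨⟨h1, h2⟩, h3⟩ := hb
    obtain ⟨c, rfl⟩ := even_iff_two_dvd.mp h3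
    exact ⟨c, ⟨Nat.dvd_of_mul_dvd_mul_left (by norm_num) h1, hm⟩, rfl⟩
  · intros; rfl

lemma sigmaOdd_odd (m : ℕ) : ArithmeticFunction.sigma 1 (2 * m + 1) = sigmaOdd (2 * m + 1) := by
  rw [ArithmeticFunction.sigma_one_apply, sigmaOdd, Finset.filter_true_of_mem]
  intro d hd
  exact Odd.of_dvd_nat ⟨m, rfl⟩ (Nat.dvd_of_mem_divisors hd)

lemma sigmaOdd_tsum {q : ℂ} (hq : ‖q‖ < 1) :
    ∑' n : ℕ, (sigmaOdd (n + 1) : ℂ) * q ^ (n + 1) = Sg 1 q - 2 * Sg 1 (q ^ 2) := by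
  have hq2 : ‖q ^ 2‖ < 1 := by rw [norm_pow]; exact pow_lt_one₀ (norm_nonneg _) hq (by norm_num)
  have s0 : Summable fun n : ℕ => (sigmaOdd n : ℂ) * q ^ n := by
    refine Summable.of_norm_bounded (Sg_summable 1 hq).norm fun n => ?_
    rw [norm_mul, norm_mul]
    gcongr
    rw [Complex.norm_natCast, Complex.norm_natCast, ArithmeticFunction.sigma_one_apply, sigmaOdd]
    exact_mod_cast Finset.sum_le_sum_of_subset (Finset.filter_subset _ _)
  have z0 : sigmaOdd 0 = 0 := by simp [sigmaOdd]
  have t1 : ∑' n : ℕ, (sigmaOdd (n + 1) : ℂ) * q ^ (n + 1) = ∑' n : ℕ, (sigmaOdd n : ℂ) * q ^ n := by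
    rw [s0.tsum_eq_zero_add]; simp [z0]
  have e1 := tsum_split (Sg_summable 1 hq)
  have e0 := tsum_split s0
  have se : Summable fun n : ℕ => (ArithmeticFunction.sigma 1 (2 * n) : ℂ) * q ^ (2 * n) :=
    (Sg_summable 1 hq).comp_injective (i := fun n : ℕ => 2 * n) (fun a b h => by simpa using h)
  have : ∀ n : ℕ, (sigmaOdd (2 * n) : ℂ) * q ^ (2 * n) =
    (ArithmeticFunction.sigma 1 (2 * n) : ℂ) * q ^ (2 * n)
      - 2 * ((ArithmeticFunction.sigma 1 n : ℂ) * (q ^ 2) ^ n) := by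
    intro n
    rcases eq_or_ne n 0 with rfl | hn
    · simp [z0]
    · simp only [sigmaOdd_even n hn, pow_mul]
      push_cast; ring
  rw [t1, e0, Sg, Sg, e1, ← tsum_mul_left, tsum_congr this,
    Summable.tsum_sub se ((Sg_summable 1 hq2).mul_left 2)]
  simp only [sigmaOdd_odd]
  ring

end

section
open Complex Real
open UpperHalfPlane hiding I
open ModularForm EisensteinSeries Manifold MatrixGroups Filter Topology

/-- Build a level one cusp form from generators. -/
def mkCusp (k : ℤ) (f : ℍ → ℂ) (hf : MDiff f) (hS : f ∣[k] ModularGroup.S = f)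
    (hT : f ∣[k] ModularGroup.T = f) (h0 : IsZeroAtImInfty f) : CuspForm 𝒮ℒ k where
  toFun := f
  slash_action_eq' A hA := by
    obtain ⟨A, rfl⟩ := hA
    exact SlashInvariantForm.slash_action_generators_SL2Z hS hT A
  holo' := hf
  zero_at_cusps' hc := by
    rw [Subgroup.IsArithmetic.isCusp_iff_isCusp_SL2Z] at hc
    rw [OnePoint.isZeroAt_iff_forall_SL2Z hc]
    intro γ _
    rw [SlashInvariantForm.slash_action_generators_SL2Z hS hT]
    exact h0

lemma cusp_four_zero (f : ℍ → ℂ) (hf : MDiff f) (hS : f ∣[(4 : ℤ)] ModularGroup.S = f)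
    (hT : f ∣[(4 : ℤ)] ModularGroup.T = f) (h0 : IsZeroAtImInfty f) : f = 0 := by
  have h := rank_zero_iff_forall_zero.mp
    (CuspForm.rank_eq_zero_of_weight_lt_twelve (k := 4) (by norm_num)) (mkCusp 4 f hf hS hT h0)
  exact congrArg DFunLike.coe h

lemma cusp_twelve_zero (f : ℍ → ℂ) (hf : MDiff f) (hS : f ∣[(12 : ℤ)] ModularGroup.S = f)
    (hT : f ∣[(12 : ℤ)] ModularGroup.T = f) (h0 : IsZeroAtImInfty f)
    (h1 : Tendsto (fun z : ℍ => f z / nome z) atImInfty (𝓝 0)) : f = 0 := by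
  obtain ⟨c, hc⟩ := CuspForm.exists_smul_discriminant_of_weight_eq_twelve (mkCusp 12 f hf hS hT h0)
  have hc' : ∀ z, c * discriminant z = f z := fun z => congrFun (congrArg DFunLike.coe hc) z
  have hne : ∀ z : ℂ, nome z ≠ 0 := fun z => Complex.exp_ne_zero _
  have h2 : Tendsto (fun z : ℍ => f z / nome z) atImInfty (𝓝 (c * 1)) := by
    refine (tendsto_atImInfty_tprod_one_sub_eta_q_pow.const_mul c).congr fun z => ?_
    rw [← hc', discriminant_eq_q_prod]
    have : Function.Periodic.qParam 1 (z : ℂ) = nome z := by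
      simp [Function.Periodic.qParam, nome]
    rw [this]
    have := hne z
    field_simp
  have hc0 : c = 0 := by simpa using tendsto_nhds_unique h2 h1
  ext z
  rw [← hc', hc0]; simp

/-- Quasi-modular `E₂` and `E₄` in the `q`-disc. -/
def Pq (q : ℂ) : ℂ := 1 - 24 * Sg 1 q
/-- `E₄` in the `q`-disc. -/
def Rq (q : ℂ) : ℂ := 1 + 240 * Sg 3 q

lemma tsum_pnat_Sg {k : ℕ} {q : ℂ} (hq : ‖q‖ < 1) :
    ∑' n : ℕ+, (ArithmeticFunction.sigma k n : ℂ) * q ^ (n : ℕ) = Sg k q := by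
  unfold Sg
  rw [← tsum_zero_pnat_eq_tsum_nat (Sg_summable k hq)]
  simp

lemma nome_norm_lt {z : ℂ} (hz : 0 < z.im) : ‖nome z‖ < 1 := by
  simpa [nome] using norm_exp_two_pi_I_lt_one ⟨z, hz⟩

lemma E2_eq (z : ℍ) : E2 z = Pq (nome z) := by
  rw [E2_eq_tsum_cexp, Pq, ← tsum_pnat_Sg (nome_norm_lt z.2)]
  rfl

lemma E4_eq (z : ℍ) : E₄ z = Rq (nome z) := by
  have := q_expansion_bernoulli (k := 4) (by norm_num) ⟨2, rfl⟩ z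
  rw [Rq, ← tsum_pnat_Sg (nome_norm_lt z.2)]
  refine this.trans ?_
  rw [show bernoulli 4 = -1 / 30 by norm_num [bernoulli, bernoulli'_four]]
  norm_num [nome]

lemma nome_tendsto : Tendsto (fun z : ℍ => nome z) atImInfty (𝓝 0) := by
  have := qParam_tendsto_atImInfty zero_lt_one
  refine this.congr fun z => ?_
  simp [Function.Periodic.qParam, nome]

lemma Pq_diffAt {q : ℂ} (hq : ‖q‖ < 1) : DifferentiableAt ℂ Pq q :=
  ((Sg_diffAt 1 hq).const_mul 24).const_sub 1
lemma Rq_diffAt {q : ℂ} (hq : ‖q‖ < 1) : DifferentiableAt ℂ Rq q :=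
  ((Sg_diffAt 3 hq).const_mul 240).const_add 1
lemma Pq_diffOn : DifferentiableOn ℂ Pq (Metric.ball 0 1) := fun q hq =>
  (Pq_diffAt (by simpa using hq)).differentiableWithinAt
lemma Pq_zero : Pq 0 = 1 := by simp [Pq, Sg_zero]
lemma Rq_zero : Rq 0 = 1 := by simp [Rq, Sg_zero]
lemma Pq_hasDerivAt_zero : HasDerivAt Pq (-24) 0 := by
  simpa using! ((Sg_hasDerivAt_zero 1).const_mul 24).const_sub 1
lemma Rq_hasDerivAt_zero : HasDerivAt Rq 240 0 := by
  have h := ((Sg_hasDerivAt_zero 3).const_mul 240).const_add 1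
  rw [mul_one] at h
  exact h

lemma nome_hasDerivAt (z : ℂ) : HasDerivAt nome (2 * π * I * nome z) z := by
  have := ((hasDerivAt_id z).const_mul (2 * (π : ℂ) * I)).cexp
  have h2 : HasDerivAt nome (nome z * (2 * (π : ℂ) * I * 1)) z := this
  rw [mul_one, mul_comm] at h2
  exact h2

end

section
open Complex Real
open UpperHalfPlane hiding I
open ModularForm EisensteinSeries Manifold MatrixGroups Filter Topology

lemma neg_inv_im {z : ℂ} (hz : 0 < z.im) : 0 < (-1 / z).im := by
  have : z ≠ 0 := by rintro rfl; simp at hz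
  rw [neg_div, one_div, Complex.neg_im, Complex.inv_im]
  have := Complex.normSq_pos.mpr this
  rw [neg_div, neg_neg]
  positivity

lemma slash_S_of {k : ℕ} {F : ℂ → ℂ} (h : ∀ z : ℂ, 0 < z.im → F (-1 / z) = z ^ k * F z) :
    (fun z : ℍ => F z) ∣[(k : ℤ)] ModularGroup.S = fun z : ℍ => F z := by
  ext z
  rw [SL_slash_apply, ModularGroup.denom_S]
  have hz : (z : ℂ) ≠ 0 := ne_zero z
  have h1 : ((ModularGroup.S • z : ℍ) : ℂ) = -1 / z := by
    rw [modular_S_smul]; simp [neg_div]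
  rw [h1, h z z.2, zpow_neg, zpow_natCast]
  field_simp

lemma slash_T_of {k : ℤ} {F : ℂ → ℂ} (h : ∀ z : ℂ, 0 < z.im → F (z + 1) = F z) :
    (fun z : ℍ => F z) ∣[k] ModularGroup.T = fun z : ℍ => F z := by
  ext z
  rw [SL_slash_apply]
  have h1 : ((ModularGroup.T • z : ℍ) : ℂ) = z + 1 := by
    rw [modular_T_smul]; simp [add_comm]
  have h2 : denom ModularGroup.T z = 1 := by
    rw [ModularGroup.denom_apply]; simp [ModularGroup.T]
  rw [h1, h z z.2, h2]; simp

lemma mdiff_of {F : ℂ → ℂ} (h : ∀ z : ℂ, 0 < z.im → DifferentiableAt ℂ F z) :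
    MDiff (fun z : ℍ => F z) := by
  rw [UpperHalfPlane.mdifferentiable_iff]
  intro z hz
  refine ((h z hz).congr_of_eventuallyEq ?_).differentiableWithinAt
  filter_upwards [isOpen_upperHalfPlaneSet.mem_nhds hz] with w hw
  simp [Function.comp, ofComplex_apply_of_im_pos hw]

/-- `E₂`, `E₄` as functions on `ℂ`. -/
def e2 (z : ℂ) : ℂ := Pq (nome z)
/-- `E₄` -/
def e4 (z : ℂ) : ℂ := Rq (nome z)

lemma nome_add_one (z : ℂ) : nome (z + 1) = nome z := by
  rw [nome, mul_add, mul_one, Complex.exp_add, Complex.exp_two_pi_mul_I, mul_one, nome]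

lemma e2_S {z : ℂ} (hz : 0 < z.im) : e2 (-1 / z) = z ^ 2 * e2 z + 12 / (2 * π * I) * z := by
  have h := congrFun (E2_slash_action ModularGroup.S) ⟨z, hz⟩
  have hz0 : z ≠ 0 := by rintro rfl; simp at hz
  have h1 : ((ModularGroup.S • (⟨z, hz⟩ : ℍ) : ℍ) : ℂ) = -1 / z := by
    rw [modular_S_smul]; simp [neg_div]
  rw [SL_slash_apply, ModularGroup.denom_S, E2_eq, h1, Pi.sub_apply, Pi.smul_apply, D2_S, E2_eq,
    riemannZeta_two] at h
  simp only [smul_eq_mul, zpow_neg] at h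
  have hpi : (π : ℂ) ≠ 0 := by exact_mod_cast Real.pi_ne_zero
  change Pq (nome (-1 / z)) = z ^ 2 * Pq (nome z) + _
  change Pq (nome (-1 / z)) * (z ^ (2 : ℤ))⁻¹ = Pq (nome z) - 1 / (2 * (π ^ 2 / 6)) * (2 * π * I / z) at h
  have h2 : (z ^ (2 : ℤ)) = z ^ 2 := by norm_cast
  rw [h2, ← div_eq_mul_inv, div_eq_iff (pow_ne_zero 2 hz0)] at h
  rw [h]
  field_simp
  ring_nf
  simp
  ring

lemma e4_S {z : ℂ} (hz : 0 < z.im) : e4 (-1 / z) = z ^ 4 * e4 z := by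
  have h := congrFun (E₄.slash_action_eq' _ ⟨ModularGroup.S, rfl⟩) ⟨z, hz⟩
  change (⇑E₄ ∣[(4 : ℤ)] ModularGroup.S) _ = E₄ _ at h
  have h1 : ((ModularGroup.S • (⟨z, hz⟩ : ℍ) : ℍ) : ℂ) = -1 / z := by
    rw [modular_S_smul]; simp [neg_div]
  have hz0 : z ≠ 0 := by rintro rfl; simp at hz
  rw [SL_slash_apply, ModularGroup.denom_S, E4_eq, h1, E4_eq, zpow_neg, ← div_eq_mul_inv,
    div_eq_iff (zpow_ne_zero _ hz0), mul_comm] at h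
  exact_mod_cast h

lemma e2_T (z : ℂ) : e2 (z + 1) = e2 z := by rw [e2, nome_add_one, e2]
lemma e4_T (z : ℂ) : e4 (z + 1) = e4 z := by rw [e4, nome_add_one, e4]
lemma e2_diff {z : ℂ} (hz : 0 < z.im) : DifferentiableAt ℂ e2 z :=
  (Pq_diffAt (nome_norm_lt hz)).comp z (nome_hasDerivAt z).differentiableAt
lemma e4_diff {z : ℂ} (hz : 0 < z.im) : DifferentiableAt ℂ e4 z :=
  (Rq_diffAt (nome_norm_lt hz)).comp z (nome_hasDerivAt z).differentiableAt
lemma e2_deriv {z : ℂ} (hz : 0 < z.im) :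
    HasDerivAt e2 (2 * π * I * (nome z * deriv Pq (nome z))) z := by
  have h := (Pq_diffAt (nome_norm_lt hz)).hasDerivAt.comp z (nome_hasDerivAt z)
  convert! h using 1
  ring

/-- `q dE₂/dq` -/
def de2 (z : ℂ) : ℂ := nome z * deriv Pq (nome z)

lemma de2_S {z : ℂ} (hz : 0 < z.im) :
    de2 (-1 / z) = z ^ 4 * de2 z + 2 / (2 * π * I) * z ^ 3 * e2 z + 12 / (2 * π * I) ^ 2 * z ^ 2 := by
  have hz0 : z ≠ 0 := by rintro rfl; simp at hz
  have h1 : HasDerivAt (fun w : ℂ => -1 / w) (1 / z ^ 2) z := by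
    have := (hasDerivAt_inv hz0).neg
    convert! this using 1
    · ext w; simp [neg_div]
    · simp
  have h2 := (e2_deriv (neg_inv_im hz)).comp z h1
  have h3 := ((hasDerivAt_pow 2 z).mul (e2_deriv hz)).add ((hasDerivAt_id z).const_mul (12 / (2 * π * I)))
  have h4 := h2.unique (h3.congr_of_eventuallyEq (by
    filter_upwards [isOpen_upperHalfPlaneSet.mem_nhds hz] with w hw
    simpa using e2_S hw))
  have hpi : (2 * π * I : ℂ) ≠ 0 := Complex.two_pi_I_ne_zero
  change 2 * π * I * (de2 (-1 / z)) * (1 / z ^ 2) = _ + z ^ 2 * (2 * π * I * de2 z) + _ at h4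
  generalize (2 * π * I : ℂ) = K at *
  generalize de2 (-1 / z) = X at *
  simp only [Nat.cast_ofNat, Nat.add_one_sub_one, pow_one, mul_one] at h4
  field_simp at h4 ⊢
  linear_combination h4

end

section
open Complex Real
open UpperHalfPlane hiding I
open ModularForm EisensteinSeries Manifold MatrixGroups Filter Topology

lemma de2_diff {z : ℂ} (hz : 0 < z.im) : DifferentiableAt ℂ de2 z := by
  have h1 : DifferentiableAt ℂ (deriv Pq) (nome z) := by
    have := (Pq_diffOn.deriv Metric.isOpen_ball) (nome z) (by simpa using nome_norm_lt hz)
    exact this.differentiableAt (Metric.isOpen_ball.mem_nhds (by simpa using nome_norm_lt hz))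
  have hn := (nome_hasDerivAt z).differentiableAt
  exact hn.mul (h1.comp z hn)

lemma R1' {z : ℂ} (hz : 0 < z.im) : e2 z ^ 2 - 12 * de2 z - e4 z = 0 := by
  let F : ℂ → ℂ := fun z => e2 z ^ 2 - 12 * de2 z - e4 z
  have hpi : (2 * π * I : ℂ) ≠ 0 := Complex.two_pi_I_ne_zero
  have hS : ∀ z : ℂ, 0 < z.im → F (-1 / z) = z ^ 4 * F z := by
    intro z hz
    simp only [F]
    rw [e2_S hz, de2_S hz, e4_S hz]
    field_simp
    ring
  have hT : ∀ z : ℂ, 0 < z.im → F (z + 1) = F z := by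
    intro z hz
    simp only [F, e2_T, e4_T, de2, nome_add_one]
  have hd : ∀ z : ℂ, 0 < z.im → DifferentiableAt ℂ F z := fun z hz =>
    (((e2_diff hz).pow 2).sub ((de2_diff hz).const_mul 12)).sub (e4_diff hz)
  have h0 : IsZeroAtImInfty (fun z : ℍ => F z) := by
    let G : ℂ → ℂ := fun q => Pq q ^ 2 - 12 * (q * deriv Pq q) - Rq q
    have hG : ContinuousAt G 0 := by
      have h1 : ContinuousAt (deriv Pq) 0 :=
        ((Pq_diffOn.deriv Metric.isOpen_ball).differentiableAt
          (Metric.isOpen_ball.mem_nhds (by simp))).continuousAt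
      have h2 := (Pq_diffAt (q := 0) (by simp)).continuousAt
      have h3 := (Rq_diffAt (q := 0) (by simp)).continuousAt
      exact ((h2.pow 2).sub ((continuousAt_id.mul h1).const_mul 12)).sub h3
    have hG0 : G 0 = 0 := by simp [G, Pq_zero, Rq_zero]
    have := hG.tendsto.comp nome_tendsto
    rw [hG0] at this
    exact this
  have := cusp_four_zero _ (mdiff_of hd) (slash_S_of (k := 4) hS) (slash_T_of hT) h0
  exact congrFun this ⟨z, hz⟩

lemma exists_nome {q : ℂ} (hq : ‖q‖ < 1) (h0 : q ≠ 0) : ∃ z : ℂ, 0 < z.im ∧ nome z = q := by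
  refine ⟨Complex.log q / (2 * π * I), ?_, ?_⟩
  · have : Complex.log q / (2 * π * I) = -(Complex.log q * I) / ((2 * π : ℝ) : ℂ) := by
      have hpi : (π : ℂ) ≠ 0 := by exact_mod_cast Real.pi_ne_zero
      push_cast
      field_simp
      simp
    rw [this, Complex.div_ofReal_im]
    have : 0 < -Real.log ‖q‖ := by
      have := Real.log_neg (norm_pos_iff.mpr h0) hq
      linarith
    have h2 : (-(Complex.log q * I)).im = -Real.log ‖q‖ := by simp [Complex.log_re]
    rw [h2]
    have := Real.pi_pos
    positivity
  · rw [nome, mul_div_cancel₀ _ Complex.two_pi_I_ne_zero, Complex.exp_log h0]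

lemma R1 {q : ℂ} (hq : ‖q‖ < 1) (h0 : q ≠ 0) : 12 * (q * deriv Pq q) = Pq q ^ 2 - Rq q := by
  obtain ⟨z, hz, rfl⟩ := exists_nome hq h0
  have := R1' hz
  rw [e2, e4, de2] at this
  linear_combination -this

/-- level two forms -/
def f1 (z : ℂ) : ℂ := 5 * (2 * e2 (2 * z) - e2 z) ^ 2 - e4 z - 4 * e4 (2 * z)
/-- level two forms -/
def f2 (z : ℂ) : ℂ := 5 * (e2 (z / 2) / 2 - e2 z) ^ 2 - e4 z - e4 (z / 2) / 4

lemma f1_T (z : ℂ) : f1 (z + 1) = f1 z := by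
  have h : 2 * (z + 1) = 2 * z + 1 + 1 := by ring
  simp only [f1, h, e2_T, e4_T]

lemma f2_T2 (z : ℂ) : f2 (z + 1 + 1) = f2 z := by
  have h : (z + 1 + 1) / 2 = z / 2 + 1 := by ring
  simp only [f2, h, e2_T, e4_T]

lemma f1_S {z : ℂ} (hz : 0 < z.im) : f1 (-1 / z) = z ^ 4 * f2 z := by
  have hz0 : z ≠ 0 := by rintro rfl; simp at hz
  have hz2 : 0 < (z / 2).im := by
    have : (z / 2).im = z.im / 2 := by exact_mod_cast Complex.div_ofReal_im z 2
    rw [this]; positivity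
  have h : 2 * (-1 / z) = -1 / (z / 2) := by field_simp
  have hpi : (2 * π * I : ℂ) ≠ 0 := Complex.two_pi_I_ne_zero
  rw [f1, f2, h, e2_S hz, e2_S hz2, e4_S hz, e4_S hz2]
  ring

lemma f2_S {z : ℂ} (hz : 0 < z.im) : f2 (-1 / z) = z ^ 4 * f1 z := by
  have hz0 : z ≠ 0 := by rintro rfl; simp at hz
  have h := f1_S (neg_inv_im hz)
  have h1 : -1 / (-1 / z) = z := by field_simp
  rw [h1] at h
  rw [h]
  field_simp

lemma f3_S {z : ℂ} (hz : 0 < z.im) : f2 (-1 / z + 1) = z ^ 4 * f2 (z + 1) := by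
  have hz0 : z ≠ 0 := by rintro rfl; simp at hz
  have hz1 : z - 1 ≠ 0 := by
    intro h; have := congrArg Complex.im h; simp at this; linarith
  have hw : 0 < (z - 1).im := by simpa using hz
  have hu : 0 < (-1 / z + 1).im := by simpa using neg_inv_im hz
  have hv := neg_inv_im hu
  have hu0 : -1 / z + 1 ≠ 0 := by intro h; rw [h] at hu; simp at hu
  have e1 : -1 / (-1 / (-1 / z + 1)) = -1 / z + 1 := by
    generalize -1 / z + 1 = u at hu0
    field_simp
  have h1 := f2_S hv
  rw [e1, ← f1_T] at h1
  have e2 : -1 / (-1 / z + 1) + 1 = -1 / (z - 1) := by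
    have : -1 / z + 1 = (z - 1) / z := by field_simp; ring
    rw [this]; field_simp; ring
  rw [e2, f1_S hw] at h1
  have e3 := f2_T2 (z - 1)
  rw [sub_add_cancel] at e3
  rw [h1, e3]
  have : -1 / z + 1 = (z - 1) / z := by field_simp; ring
  rw [this]
  field_simp

lemma R2' {z : ℂ} (hz : 0 < z.im) : f1 z = 0 := by
  have him2 : ∀ z : ℂ, 0 < z.im → 0 < (z / 2).im := fun z hz => by
    have : (z / 2).im = z.im / 2 := by exact_mod_cast Complex.div_ofReal_im z 2
    rw [this]; positivity
  have d1 : ∀ z : ℂ, 0 < z.im → DifferentiableAt ℂ f1 z := fun z hz => by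
    have h2 : DifferentiableAt ℂ (fun z : ℂ => 2 * z) z := by fun_prop
    have hz2 : 0 < (2 * z).im := by simpa using hz
    have a1 : DifferentiableAt ℂ (fun z => e2 (2 * z)) z := (e2_diff hz2).comp z h2
    have a2 : DifferentiableAt ℂ (fun z => e4 (2 * z)) z := (e4_diff hz2).comp z h2
    have a3 := e2_diff hz
    have a4 := e4_diff hz
    unfold f1
    fun_prop
  have d2 : ∀ z : ℂ, 0 < z.im → DifferentiableAt ℂ f2 z := fun z hz => by
    have h2 : DifferentiableAt ℂ (fun z : ℂ => z / 2) z := by fun_prop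
    have a1 : DifferentiableAt ℂ (fun z => e2 (z / 2)) z :=
      (e2_diff (him2 z hz)).comp (f := fun z : ℂ => z / 2) z h2
    have a2 : DifferentiableAt ℂ (fun z => e4 (z / 2)) z :=
      (e4_diff (him2 z hz)).comp (f := fun z : ℂ => z / 2) z h2
    have a3 := e2_diff hz
    have a4 := e4_diff hz
    unfold f2
    fun_prop
  have d3 : ∀ z : ℂ, 0 < z.im → DifferentiableAt ℂ (fun z => f2 (z + 1)) z := fun z hz =>
    (d2 (z + 1) (by simpa using hz)).comp (f := fun z : ℂ => z + 1) z (by fun_prop)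
  have hne : ∀ z : ℂ, nome z ≠ 0 := fun z => Complex.exp_ne_zero _
  have nome2 : ∀ z, nome (2 * z) = nome z ^ 2 := fun z => by
    rw [nome, nome, ← Complex.exp_nat_mul]; congr 1; push_cast; ring
  have P0 := Pq_hasDerivAt_zero
  have R0 := Rq_hasDerivAt_zero
  have t1 : Tendsto (fun z : ℍ => f1 z / nome z) atImInfty (𝓝 0) := by
    let G : ℂ → ℂ := fun q => 5 * (2 * Pq (q ^ 2) - Pq q) ^ 2 - Rq q - 4 * Rq (q ^ 2)
    have hsq : HasDerivAt (fun q : ℂ => q ^ 2) 0 0 := by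
      simpa using hasDerivAt_pow 2 (0 : ℂ)
    have P2 : HasDerivAt (fun q : ℂ => Pq (q ^ 2)) (-24 * 0) 0 :=
      HasDerivAt.comp (h := fun q : ℂ => q ^ 2) (h₂ := Pq) 0 (by simpa using P0) hsq
    have R2 : HasDerivAt (fun q : ℂ => Rq (q ^ 2)) (240 * 0) 0 :=
      HasDerivAt.comp (h := fun q : ℂ => q ^ 2) (h₂ := Rq) 0 (by simpa using R0) hsq
    have hG : HasDerivAt G 0 0 := by
      have := ((((((P2.const_mul 2).sub P0).pow 2).const_mul 5).sub R0).sub (R2.const_mul 4))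
      refine HasDerivAt.congr_deriv this ?_
      simp [Pq_zero]
      norm_num
    have hG0 : G 0 = 0 := by simp [G, Pq_zero, Rq_zero]; norm_num
    rw [hasDerivAt_iff_tendsto_slope] at hG
    have hn : Tendsto (fun z : ℍ => nome z) atImInfty (𝓝[≠] 0) :=
      tendsto_nhdsWithin_iff.mpr ⟨nome_tendsto, .of_forall fun z => hne z⟩
    refine (hG.comp hn).congr fun z => ?_
    simp only [Function.comp, slope_def_field, hG0, sub_zero]
    simp only [G, f1, e2, e4, nome2]
  have nh : Tendsto (fun z : ℍ => nome ((z : ℂ) / 2)) atImInfty (𝓝 0) := by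
    have h := nome_tendsto
    rw [tendsto_zero_iff_norm_tendsto_zero] at h ⊢
    have := h.sqrt
    rw [Real.sqrt_zero] at this
    refine this.congr fun z => ?_
    rw [Real.sqrt_eq_iff_mul_self_eq (norm_nonneg _) (norm_nonneg _), ← norm_mul, ← sq, ← nome2]
    congr 2; ring
  have nh' : Tendsto (fun z : ℍ => nome (((z : ℂ) + 1) / 2)) atImInfty (𝓝 0) := by
    have : ∀ z : ℂ, nome ((z + 1) / 2) = - nome (z / 2) := fun z => by
      have h : 2 * (π : ℂ) * I * ((z + 1) / 2) = 2 * π * I * (z / 2) + π * I := by ring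
      rw [nome, h, Complex.exp_add, Complex.exp_pi_mul_I, nome]; ring
    simp only [this]
    simpa using nh.neg
  have cP : ∀ {g : ℍ → ℂ}, Tendsto g atImInfty (𝓝 0) →
      Tendsto (fun z => Pq (g z)) atImInfty (𝓝 1) := fun hg => by
    have := P0.continuousAt.tendsto.comp hg
    rwa [Pq_zero] at this
  have cR : ∀ {g : ℍ → ℂ}, Tendsto g atImInfty (𝓝 0) →
      Tendsto (fun z => Rq (g z)) atImInfty (𝓝 1) := fun hg => by
    have := R0.continuousAt.tendsto.comp hg
    rwa [Rq_zero] at this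
  have t2 : Tendsto (fun z : ℍ => f2 z) atImInfty (𝓝 0) := by
    have := (((((((cP nh).div_const 2).sub (cP nome_tendsto)).pow 2).const_mul 5).sub
      (cR nome_tendsto)).sub ((cR nh).div_const 4))
    norm_num at this
    exact this
  have t3 : Tendsto (fun z : ℍ => f2 ((z : ℂ) + 1)) atImInfty (𝓝 0) := by
    have := (((((((cP nh').div_const 2).sub (cP nome_tendsto)).pow 2).const_mul 5).sub
      (cR nome_tendsto)).sub ((cR nh').div_const 4))
    norm_num at this
    refine this.congr fun z => ?_
    rw [f2, e2_T, e4_T]; simp only [e2, e4]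
  let F : ℂ → ℂ := fun z => f1 z * (f2 z * f2 (z + 1))
  have hF1 : Tendsto (fun z : ℍ => F z / nome z) atImInfty (𝓝 0) := by
    have := t1.mul (t2.mul t3)
    rw [zero_mul] at this
    refine this.congr fun z => ?_
    simp only [F]; ring
  have hF0 : IsZeroAtImInfty (fun z : ℍ => F z) := by
    have := hF1.mul nome_tendsto
    rw [zero_mul] at this
    refine this.congr fun z => ?_
    exact div_mul_cancel₀ _ (hne z)
  have hS : ∀ z : ℂ, 0 < z.im → F (-1 / z) = z ^ 12 * F z := by
    intro z hz
    simp only [F]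
    rw [f1_S hz, f2_S hz, f3_S hz]
    ring
  have hT : ∀ z : ℂ, 0 < z.im → F (z + 1) = F z := by
    intro z hz
    simp only [F, f1_T, f2_T2]; ring
  have hF := cusp_twelve_zero _ (mdiff_of fun z hz => (d1 z hz).mul ((d2 z hz).mul (d3 z hz)))
    (slash_S_of (k := 12) hS) (slash_T_of hT) hF0 hF1
  have m1 := mdiff_of d1
  have m2 := mdiff_of d2
  have m3 := mdiff_of d3
  have key := (UpperHalfPlane.mul_eq_zero_iff m1 (m2.mul m3)).mp hF
  have fin2 : (∀ w : ℂ, 0 < w.im → f2 w = 0) → f1 z = 0 := fun h => by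
    have hz0 : z ≠ 0 := by rintro rfl; simp at hz
    have := f2_S hz
    rw [h _ (neg_inv_im hz)] at this
    simpa [hz0] using this.symm
  rcases key with h | h
  · exact congrFun h ⟨z, hz⟩
  · rcases (UpperHalfPlane.mul_eq_zero_iff m2 m3).mp h with h | h
    · exact fin2 fun w hw => congrFun h ⟨w, hw⟩
    · refine fin2 fun w hw => ?_
      have := congrFun h ⟨w - 1, by simpa using hw⟩
      simpa using this

lemma R2 {q : ℂ} (hq : ‖q‖ < 1) (h0 : q ≠ 0) :
    5 * (2 * Pq (q ^ 2) - Pq q) ^ 2 = Rq q + 4 * Rq (q ^ 2) := by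
  obtain ⟨z, hz, rfl⟩ := exists_nome hq h0
  have nome2 : nome (2 * z) = nome z ^ 2 := by
    rw [nome, nome, ← Complex.exp_nat_mul]; congr 1; push_cast; ring
  have := R2' hz
  rw [f1, e2, e2, e4, e4, nome2] at this
  linear_combination this

end

section
open Complex Real
open UpperHalfPlane hiding I
open ModularForm EisensteinSeries Manifold MatrixGroups Filter Topology

lemma norm_pow_lt {q : ℂ} (hq : ‖q‖ < 1) (n : ℕ) (hn : n ≠ 0) : ‖q ^ n‖ < 1 := by
  rw [norm_pow]; exact pow_lt_one₀ (norm_nonneg _) hq hn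

lemma H1 {q : ℂ} (hq : ‖q‖ < 1) : Pq q + Pq (-q) = 6 * Pq (q ^ 2) - 4 * Pq (q ^ 4) := by
  have := Sg_hecke (k := 1) one_ne_zero hq
  simp only [Pq]
  linear_combination -24 * this

lemma H3 {q : ℂ} (hq : ‖q‖ < 1) : Rq q + Rq (-q) = 18 * Rq (q ^ 2) - 16 * Rq (q ^ 4) := by
  have := Sg_hecke (k := 3) (by norm_num) hq
  simp only [Rq]
  linear_combination 240 * this

/-- Euler product. -/
def pq (x : ℂ) : ℂ := ∏' n : ℕ, (1 - x ^ (n + 1))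

lemma pq_zero : pq 0 = 1 := by simp [pq]

lemma pq_diffAt {q : ℂ} (hq : ‖q‖ < 1) : DifferentiableAt ℂ pq q :=
  differentiableOn_tprod_one_sub_pow.differentiableAt
    (Metric.isOpen_ball.mem_nhds (by simpa using hq))

lemma pq_nome_eq (z : ℂ) : pq (nome z) = ∏' n, (1 - eta_q n z) := by
  simp only [pq, eta_q_eq_pow]; rfl

lemma pq_ne {q : ℂ} (hq : ‖q‖ < 1) (h0 : q ≠ 0) : pq q ≠ 0 := by
  obtain ⟨z, hz, rfl⟩ := exists_nome hq h0
  rw [pq_nome_eq]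
  exact eta_tprod_ne_zero hz

lemma pq_deriv {q : ℂ} (hq : ‖q‖ < 1) (h0 : q ≠ 0) :
    HasDerivAt pq (pq q * (Pq q - 1) / (24 * q)) q := by
  have hd := (pq_diffAt hq).hasDerivAt
  refine hd.congr_deriv ?_
  have hp := pq_ne hq h0
  obtain ⟨z, hz, rfl⟩ := exists_nome hq h0
  have h := logDeriv_eta_eq_E2 ⟨z, hz⟩
  have he : ModularForm.eta = fun z => cexp (π * I / 12 * z) * pq (nome z) := by
    ext z
    rw [ModularForm.eta, pq_nome_eq]
    congr 1
    rw [Function.Periodic.qParam]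
    congr 1; push_cast; ring
  have h1 : HasDerivAt ModularForm.eta
      (cexp (π * I / 12 * z) * (π * I / 12 * 1) * pq (nome z) +
        cexp (π * I / 12 * z) * (deriv pq (nome z) * (2 * π * I * nome z))) z := by
    rw [he]
    exact (((hasDerivAt_id z).const_mul (π * I / 12 : ℂ)).cexp).mul (hd.comp z (nome_hasDerivAt z))
  rw [E2_eq, logDeriv_apply] at h
  change deriv ModularForm.eta z / ModularForm.eta z = _ * Pq (nome z) at h
  have hne : ModularForm.eta z ≠ 0 := ModularForm.eta_ne_zero hz
  rw [div_eq_iff hne, h1.deriv, he] at h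
  have hpi : (π : ℂ) ≠ 0 := by exact_mod_cast Real.pi_ne_zero
  have hI := Complex.I_ne_zero
  have hex := Complex.exp_ne_zero (π * I / 12 * z)
  rw [eq_div_iff (by simpa using h0)]
  have key : cexp (π * I / 12 * z) * (π * I / 12) *
      (deriv pq (nome z) * (24 * nome z) - pq (nome z) * (Pq (nome z) - 1)) = 0 := by
    linear_combination h
  have := (mul_eq_zero.mp key).resolve_left (by
    refine mul_ne_zero hex (div_ne_zero (mul_ne_zero hpi hI) (by norm_num)))
  linear_combination this

lemma Pq_deriv {q : ℂ} (hq : ‖q‖ < 1) (h0 : q ≠ 0) :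
    HasDerivAt Pq ((Pq q ^ 2 - Rq q) / (12 * q)) q := by
  refine (Pq_diffAt hq).hasDerivAt.congr_deriv ?_
  rw [← R1 hq h0]; field_simp

/-- generating function of odd divisor sums -/
def Gq (q : ℂ) : ℂ := (Pq (-q) - Pq q) / 48
/-- eta quotient -/
def Aq (q : ℂ) : ℂ := pq (q ^ 2) ^ 4 / (q * pq (q ^ 4) ^ 8)

lemma hd_pow (n : ℕ) {f : ℂ → ℂ} {f' q : ℂ} (h : HasDerivAt f f' (q ^ n)) :
    HasDerivAt (fun x => f (x ^ n)) (f' * (n * q ^ (n - 1))) q :=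
  HasDerivAt.comp (h := fun x : ℂ => x ^ n) q h (hasDerivAt_pow n q)

lemma Gq_deriv {q : ℂ} (hq : ‖q‖ < 1) (h0 : q ≠ 0) :
    HasDerivAt Gq (Gq q * (4 * Pq (q ^ 4) - Pq (q ^ 2)) / (3 * q)) q := by
  have hqn : ‖-q‖ < 1 := by simpa using hq
  have h0n : -q ≠ 0 := neg_ne_zero.mpr h0
  have hn : HasDerivAt (fun x => Pq (-x)) ((Pq (-q) ^ 2 - Rq (-q)) / (12 * -q) * -1) q :=
    HasDerivAt.comp (h := fun x : ℂ => -x) q (Pq_deriv hqn h0n) (hasDerivAt_neg q)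
  refine ((hn.sub (Pq_deriv hq h0)).div_const 48).congr_deriv ?_
  have e1 := R2 hq h0
  have e2 := R2 hqn h0n
  have e3 := H1 hq
  rw [neg_sq] at e2
  rw [Gq]
  field_simp
  linear_combination 3 * (e2 - e1) + 12 * (Pq q - Pq (-q)) * e3

lemma Aq_deriv {q : ℂ} (hq : ‖q‖ < 1) (h0 : q ≠ 0) :
    HasDerivAt Aq (Aq q * (Pq (q ^ 2) - 4 * Pq (q ^ 4)) / (3 * q)) q := by
  have hq2 := norm_pow_lt hq 2 (by norm_num)
  have hq4 := norm_pow_lt hq 4 (by norm_num)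
  have p2 := hd_pow 2 (pq_deriv hq2 (pow_ne_zero 2 h0))
  have p4 := hd_pow 4 (pq_deriv hq4 (pow_ne_zero 4 h0))
  have n4 := pq_ne hq4 (pow_ne_zero 4 h0)
  refine ((p2.pow 4).div ((hasDerivAt_id q).mul (p4.pow 8))
    (mul_ne_zero h0 (pow_ne_zero 8 n4))).congr_deriv ?_
  simp only [Aq, id, Pi.mul_apply, Pi.pow_apply]
  field_simp
  push_cast
  ring

lemma Gq_hasDerivAt_zero : HasDerivAt Gq 1 0 := by
  have hn : HasDerivAt (fun x => Pq (-x)) (-24 * -1) 0 :=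
    HasDerivAt.comp (h := fun x : ℂ => -x) (h₂ := Pq) 0 (by simpa using Pq_hasDerivAt_zero) (hasDerivAt_neg 0)
  refine ((hn.sub Pq_hasDerivAt_zero).div_const 48).congr_deriv ?_
  norm_num

lemma GA {q : ℂ} (hq : ‖q‖ < 1) (h0 : q ≠ 0) : Gq q * Aq q = 1 := by
  let W : ℂ → ℂ := fun z => Gq (nome z) * Aq (nome z)
  have hne : ∀ z : ℂ, nome z ≠ 0 := fun z => Complex.exp_ne_zero _
  have hW : ∀ z : ℂ, 0 < z.im → HasDerivAt W 0 z := fun z hz => by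
    have hz1 := nome_norm_lt hz
    have h := ((Gq_deriv hz1 (hne z)).mul (Aq_deriv hz1 (hne z))).comp z (nome_hasDerivAt z)
    refine h.congr_deriv ?_
    have := hne z
    field_simp
    ring
  have hlim : Tendsto (fun z : ℍ => W z) atImInfty (𝓝 1) := by
    have hn : Tendsto (fun z : ℍ => nome z) atImInfty (𝓝[≠] 0) :=
      tendsto_nhdsWithin_iff.mpr ⟨nome_tendsto, .of_forall fun z => hne z⟩
    have h1 := (hasDerivAt_iff_tendsto_slope.mp Gq_hasDerivAt_zero).comp hn
    have hG0 : Gq 0 = 0 := by simp [Gq]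
    have hc : ContinuousAt (fun q : ℂ => pq (q ^ 2) ^ 4 / pq (q ^ 4) ^ 8) 0 := by
      have c2 : ContinuousAt (fun q : ℂ => pq (q ^ 2)) 0 :=
        ContinuousAt.comp (f := fun q : ℂ => q ^ 2) (pq_diffAt (by simp)).continuousAt (by fun_prop)
      have c4 : ContinuousAt (fun q : ℂ => pq (q ^ 4)) 0 :=
        ContinuousAt.comp (f := fun q : ℂ => q ^ 4) (pq_diffAt (by simp)).continuousAt (by fun_prop)
      exact (c2.pow 4).div (c4.pow 8) (by simp [pq_zero])
    have h2 := hc.tendsto.comp nome_tendsto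
    have h3 := h1.mul h2
    simp only [ne_eq, OfNat.ofNat_ne_zero, not_false_eq_true, zero_pow, pq_zero, one_pow, div_one,
      mul_one] at h3
    refine h3.congr fun z => ?_
    have := hne z
    simp only [W, Function.comp, slope_def_field, hG0, sub_zero, Aq]
    rw [← div_div, div_mul_eq_mul_div, mul_div_assoc, div_right_comm]
  obtain ⟨z, hz, rfl⟩ := exists_nome hq h0
  have hconn : IsPreconnected {z : ℂ | 0 < z.im} :=
    (Complex.isConnected_of_upperHalfPlane subset_rfl (by grind)).isPreconnected
  have hop : IsOpen {z : ℂ | 0 < z.im} := isOpen_upperHalfPlaneSet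
  have hconst : ∀ w : ℍ, W z = W w := fun w =>
    hop.is_const_of_deriv_eq_zero hconn
      (fun x hx => (hW x hx).differentiableAt.differentiableWithinAt)
      (fun x hx => (hW x hx).deriv) hz w.2
  exact tendsto_nhds_unique (tendsto_const_nhds.congr hconst) hlim

lemma main_q {q : ℂ} (hq : ‖q‖ < 1) (h0 : q ≠ 0) :
    ∃ d, HasDerivAt (fun q => Aq q * (2 * Pq (q ^ 4) - Pq (q ^ 2))) d q ∧
      q * d = -(2 * Pq (q ^ 4) - Pq (q ^ 2)) * (Aq q * (2 * Pq (q ^ 4) - Pq (q ^ 2))) +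
        64 * Gq q := by
  have hq2 := norm_pow_lt hq 2 (by norm_num)
  have hq4 := norm_pow_lt hq 4 (by norm_num)
  have hqn : ‖-q‖ < 1 := by simpa using hq
  have h0n : -q ≠ 0 := neg_ne_zero.mpr h0
  have p2 := hd_pow 2 (Pq_deriv hq2 (pow_ne_zero 2 h0))
  have p4 := hd_pow 4 (Pq_deriv hq4 (pow_ne_zero 4 h0))
  refine ⟨_, (Aq_deriv hq h0).mul ((p4.const_mul 2).sub p2), ?_⟩
  have e1 := R2 hq h0
  have e2 := R2 hqn h0n
  have e3 := R2 hq2 (pow_ne_zero 2 h0)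
  have e4 := H1 hq
  have e5 := H3 hq
  have e6 := GA hq h0
  rw [neg_sq] at e2
  rw [← pow_mul] at e3
  have hG : Gq q = (Pq (-q) - Pq q) / 48 := rfl
  norm_num only at e3
  have ea : Pq (-q) = 6 * Pq (q ^ 2) - 4 * Pq (q ^ 4) - Pq q := by linear_combination e4
  have er : Rq (-q) = 18 * Rq (q ^ 2) - 16 * Rq (q ^ 4) - Rq q := by linear_combination e5
  have hG2 : (2 * Pq (q ^ 4) - Pq (q ^ 2)) * (Pq (q ^ 2) - 4 * Pq (q ^ 4)) / 3 +
      (4 * (Pq (q ^ 4) ^ 2 - Rq (q ^ 4)) - (Pq (q ^ 2) ^ 2 - Rq (q ^ 2))) / 6 +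
      (2 * Pq (q ^ 4) - Pq (q ^ 2)) ^ 2 = 64 * Gq q ^ 2 := by
    rw [hG]
    rw [er, ea] at e2
    rw [ea]
    linear_combination (11 / 90) * e3 - (1 / 90) * (e1 + e2)
  have hfin : Aq q * (64 * Gq q ^ 2) = 64 * Gq q := by linear_combination 64 * Gq q * e6
  rw [← hfin, ← hG2]
  field_simp
  push_cast
  ring

end

lemma nome_nat_mul (n : ℕ) (z : ℂ) : nome (n * z) = nome z ^ n := by
  rw [nome, nome, ← Complex.exp_nat_mul]; congr 1; ring

lemma Estar_eq {τ : ℂ} (hτ : 0 < τ.im) :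
    Estar (2 * τ) = 2 * Pq (nome τ ^ 4) - Pq (nome τ ^ 2) := by
  have h2 : nome (2 * τ) = nome τ ^ 2 := by exact_mod_cast nome_nat_mul 2 τ
  rw [Estar, h2, sigmaOdd_tsum (norm_pow_lt (nome_norm_lt hτ) 2 (by norm_num)), ← pow_mul]
  simp only [Pq]
  ring

lemma Eodd_eq {τ : ℂ} (hτ : 0 < τ.im) : Eodd τ = Gq (nome τ) := by
  have h := Sg_odd 1 (nome_norm_lt hτ)
  have : Eodd τ = ∑' n : ℕ, (ArithmeticFunction.sigma 1 (2 * n + 1) : ℂ) * nome τ ^ (2 * n + 1) := by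
    simp only [Eodd, ArithmeticFunction.sigma_one_apply]
  rw [this, Gq, Pq, Pq]
  linear_combination -h / 2

lemma hfun_eq {τ : ℂ} (hτ : 0 < τ.im) :
    hfun τ = Aq (nome τ) * (2 * Pq (nome τ ^ 4) - Pq (nome τ ^ 2)) := by
  have h2 : nome (2 * τ) = nome τ ^ 2 := by exact_mod_cast nome_nat_mul 2 τ
  have h4 : nome (4 * τ) = nome τ ^ 4 := by exact_mod_cast nome_nat_mul 4 τ
  rw [hfun, Estar_eq hτ]
  congr 1
  rw [dedekindEta, dedekindEta, h2, h4, Aq]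
  change (_ * pq (nome τ ^ 2)) ^ 4 / (_ * pq (nome τ ^ 4)) ^ 8 = _
  rw [mul_pow, mul_pow, ← Complex.exp_nat_mul, ← Complex.exp_nat_mul]
  have e : cexp ((8 : ℕ) * (π * I * (4 * τ) / 12)) =
      cexp ((4 : ℕ) * (π * I * (2 * τ) / 12)) * nome τ := by
    rw [nome, ← Complex.exp_add]; congr 1; push_cast; ring
  rw [e, mul_assoc (cexp _) (nome τ), mul_div_mul_left _ _ (Complex.exp_ne_zero _)]

/-- For `τ ∈ ℍ`: `(q d/dq) h(τ) = −E*(2τ)h(τ) + 64 E_odd(τ)`, with `q d/dq = (2πi)⁻¹ d/dτ`. -/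
theorem stmt12 (τ : ℂ) (hτ : 0 < τ.im) :
    (1 / (2 * (π : ℂ) * I)) * deriv hfun τ = -Estar (2 * τ) * hfun τ + 64 * Eodd τ := by
  obtain ⟨d, hd, he⟩ := main_q (nome_norm_lt hτ) (Complex.exp_ne_zero _ : nome τ ≠ 0)
  have h := hd.comp τ (nome_hasDerivAt τ)
  have h' : HasDerivAt hfun (d * (2 * π * I * nome τ)) τ := by
    refine h.congr_of_eventuallyEq ?_
    filter_upwards [UpperHalfPlane.isOpen_upperHalfPlaneSet.mem_nhds hτ] with w hw
    exact hfun_eq hw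
  rw [h'.deriv, Estar_eq hτ, hfun_eq hτ, Eodd_eq hτ, ← he]
  have hpi : (2 * π * I : ℂ) ≠ 0 := Complex.two_pi_I_ne_zero
  field_simp
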